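/- arXiv:2511.04430 — 3 statements merged into one kernel-verified Lean document; each statement's English description precedes it below -/
import Mathlib

section
/- Let N, L_x, L_y be positive integers, a an integer, and N_a the largest divisor of N coprime to a. Then the cardinality of the quotient ring R_N ⧸ Ideal.span {(X − a)(X − 1), (Y − a)(Y − 1), X^{L_x} − 1, Y^{L_y} − 1} equals N · gcd(N_a, G_{L_x}) · gcd(N_a, G_{L_y}) · gcd(N_a, G_{L_x}, G_{L_y}), where G_L = ∑_{m=0}^{L−1} a^m. Consequently, the ground state degeneracy of the Delfino–Chamon–You model on an L_x × L_y torus is the square of this quantity. -/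
/-- The Laurent polynomial ring `(ZMod N)[X^{±1}, Y^{±1}]`. -/
abbrev RR (N : ℕ) : Type := AddMonoidAlgebra (ZMod N) (ℤ × ℤ)

/-- The monomial `X`. -/
noncomputable def Xv (N : ℕ) : RR N := AddMonoidAlgebra.single ((1 : ℤ), (0 : ℤ)) 1

/-- The monomial `Y`. -/
noncomputable def Yv (N : ℕ) : RR N := AddMonoidAlgebra.single ((0 : ℤ), (1 : ℤ)) 1

/-!
If `(x - a) * (x - 1) = 0`, then `x ^ L - 1 = G_L * (x - 1)`. Imposing `x ^ L = 1` also makes `x`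
invertible, so passing to Laurent polynomials costs nothing, and over `A = ZMod N` the quotient ring
is the tensor product of two one-variable algebras, each generated by `ω = x - 1` with
`ω ^ 2 = (a - 1) * ω` and `G_L * ω = 0`. As an `A`-module such an algebra is `A × A ⧸ (G_L)`.
Distributing the tensor product over these sums leaves the cyclic modules `A`, `A ⧸ (G_Lx)`,
`A ⧸ (G_Ly)` and `A ⧸ (G_Lx, G_Ly)`. Finally `ZMod N ⧸ (g)` has `gcd(N, g)` elements, and this is
`gcd(N_a, g)` when `g` is coprime to `a`, as is `G_L`, which is congruent to `1` modulo `a`.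
-/

open scoped QuadraticAlgebra TensorProduct

section GeomSum

variable {A : Type*} [CommRing A]

theorem pow_sub_one_eq_geom_sum_mul {x a : A} (h : (x - a) * (x - 1) = 0) (L : ℕ) :
    x ^ L - 1 = (∑ m ∈ Finset.range L, a ^ m) * (x - 1) := by
  have pow_mul_sub_one (m : ℕ) : x ^ m * (x - 1) = a ^ m * (x - 1) := by
    induction m with
    | zero => simp
    | succ m ih => linear_combination x * ih + a ^ m * h
  rw [← geom_sum_mul, Finset.sum_mul, Finset.sum_mul]
  exact Finset.sum_congr rfl fun m _ => pow_mul_sub_one m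

theorem isCoprime_geom_sum (a : A) {L : ℕ} (hL : L ≠ 0) :
    IsCoprime (∑ m ∈ Finset.range L, a ^ m) a := by
  obtain ⟨L, rfl⟩ := Nat.exists_eq_succ_of_ne_zero hL
  exact ⟨1, -∑ m ∈ Finset.range L, a ^ m, by rw [geom_sum_succ]; ring⟩

end GeomSum

section QuadraticAlgebra

variable {A : Type*} [CommRing A] (b g : A)

theorem mem_span_smul_omega_iff {z : QuadraticAlgebra A 0 b} :
    z ∈ Ideal.span {g • (ω : QuadraticAlgebra A 0 b)} ↔ z.re = 0 ∧ g ∣ z.im := by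
  rw [Ideal.mem_span_singleton]
  constructor
  · rintro ⟨w, rfl⟩
    exact ⟨by simp, w.re + b * w.im, by simp [mul_add]⟩
  · rintro ⟨hre, q, him⟩
    exact ⟨algebraMap A _ q, by ext <;> simp [hre, him]⟩

/-- The splitting `A × A ⧸ (g)` of `A[ω] ⧸ (g • ω)`, where `ω ^ 2 = b • ω`, given by the coordinates
with respect to `1` and `ω`. -/
noncomputable def quotientSpanSMulOmegaEquiv :
    (QuadraticAlgebra A 0 b ⧸ Ideal.span {g • (ω : QuadraticAlgebra A 0 b)}) ≃ₗ[A]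
      A × (A ⧸ Ideal.span {g}) :=
  let coords : QuadraticAlgebra A 0 b →ₗ[A] A × (A ⧸ Ideal.span {g}) :=
    (QuadraticAlgebra.reₗ 0 b).prod
      ((Ideal.Quotient.mkₐ A (Ideal.span {g})).toLinearMap ∘ₗ QuadraticAlgebra.imₗ 0 b)
  have ker_coords : (Ideal.span {g • (ω : QuadraticAlgebra A 0 b)}).restrictScalars A =
      LinearMap.ker coords := by
    ext z
    rw [Submodule.restrictScalars_mem, mem_span_smul_omega_iff]
    simp [coords, Ideal.Quotient.eq_zero_iff_mem, Ideal.mem_span_singleton]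
  have coords_surjective : Function.Surjective coords := by
    rintro ⟨p, q⟩
    obtain ⟨q, rfl⟩ := Ideal.Quotient.mk_surjective q
    exact ⟨⟨p, q⟩, rfl⟩
  (Submodule.Quotient.restrictScalarsEquiv A _).symm ≪≫ₗ
    Submodule.quotEquivOfEq _ _ ker_coords ≪≫ₗ coords.quotKerEquivOfSurjective coords_surjective

end QuadraticAlgebra

/-- The universal `A`-algebra on an element `x` with `(x - a) * (x - 1) = 0` and `x ^ L = 1`.
It is presented through `ω = x - 1`, subject to `ω ^ 2 = (a - 1) • ω` and
`(1 + a + ⋯ + a ^ (L - 1)) • ω = 0`, so that its module structure can be read off. -/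
def TwoRootAlgebra {A : Type*} [CommRing A] (a : A) (L : ℕ) : Type _ :=
  QuadraticAlgebra A 0 (a - 1) ⧸
    Ideal.span {(∑ m ∈ Finset.range L, a ^ m) • (ω : QuadraticAlgebra A 0 (a - 1))}

namespace TwoRootAlgebra

variable {A : Type*} [CommRing A] (a : A) (L : ℕ)

instance : CommRing (TwoRootAlgebra a L) :=
  inferInstanceAs (CommRing (QuadraticAlgebra A 0 (a - 1) ⧸ _))

instance : Algebra A (TwoRootAlgebra a L) :=
  inferInstanceAs (Algebra A (QuadraticAlgebra A 0 (a - 1) ⧸ _))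

/-- The quotient map of the presentation. -/
def mk : QuadraticAlgebra A 0 (a - 1) →ₐ[A] TwoRootAlgebra a L :=
  Ideal.Quotient.mkₐ A _

/-- The universal element `x = 1 + ω`. -/
def root : TwoRootAlgebra a L :=
  mk a L (1 + ω)

theorem root_sub_mul_root_sub_one :
    (root a L - algebraMap A _ a) * (root a L - 1) = 0 := by
  have omega_relation :
      (1 + ω - algebraMap A (QuadraticAlgebra A 0 (a - 1)) a) * (1 + ω - 1) = 0 := by
    ext <;> simp
  simpa [root] using congrArg (mk a L) omega_relation

theorem root_pow : root a L ^ L = 1 := by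
  have geom_sum_smul_mk_omega : mk a L ((∑ m ∈ Finset.range L, a ^ m) • ω) = 0 :=
    Ideal.Quotient.eq_zero_iff_mem.2 (Ideal.mem_span_singleton_self _)
  have geom_sum_mul_root_sub_one :
      (∑ m ∈ Finset.range L, algebraMap A _ a ^ m) * (root a L - 1) = 0 := by
    simpa [root, Algebra.smul_def] using geom_sum_smul_mk_omega
  rw [← sub_eq_zero, pow_sub_one_eq_geom_sum_mul (root_sub_mul_root_sub_one a L) L,
    geom_sum_mul_root_sub_one]

variable {a L} {S : Type*} [CommRing S] [Algebra A S]

/-- The homomorphism out of `TwoRootAlgebra a L` determined by the image `x` of the root. -/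
def lift (x : S) (hx : (x - algebraMap A S a) * (x - 1) = 0) (hxL : x ^ L = 1) :
    TwoRootAlgebra a L →ₐ[A] S :=
  let liftOmega : QuadraticAlgebra A 0 (a - 1) →ₐ[A] S := QuadraticAlgebra.lift ⟨x - 1, by
    simp only [Algebra.smul_def, map_zero, map_sub, map_one]
    linear_combination hx⟩
  have liftOmega_omega : liftOmega ω = x - 1 := by simp [liftOmega]
  have span_le_ker : Ideal.span {(∑ m ∈ Finset.range L, a ^ m) • ω} ≤ RingHom.ker liftOmega := by
    rw [Ideal.span_singleton_le_iff_mem, RingHom.mem_ker, Algebra.smul_def, map_mul,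
      AlgHom.commutes, liftOmega_omega, map_sum]
    simp only [map_pow, ← pow_sub_one_eq_geom_sum_mul hx L, hxL, sub_self]
  Ideal.Quotient.liftₐ _ liftOmega span_le_ker

theorem lift_root (x : S) (hx : (x - algebraMap A S a) * (x - 1) = 0) (hxL : x ^ L = 1) :
    lift x hx hxL (root a L) = x :=
  (Ideal.Quotient.lift_mk ..).trans (by simp)

theorem algHom_ext {f g : TwoRootAlgebra a L →ₐ[A] S} (h : f (root a L) = g (root a L)) :
    f = g := by
  refine Ideal.Quotient.algHom_ext _ (?_ : f.comp (mk a L) = g.comp (mk a L))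
  exact QuadraticAlgebra.algHom_ext (by simpa [root] using h)

end TwoRootAlgebra

section TensorProduct

variable {A : Type*} [CommRing A] (I J : Ideal A)

/-- The isomorphism `A ⧸ I ⊗ A ⧸ J ≃ A ⧸ (I + J)`. -/
noncomputable def quotientTensorQuotientEquiv : (A ⧸ I) ⊗[A] (A ⧸ J) ≃ₗ[A] A ⧸ (I ⊔ J) :=
  (Algebra.TensorProduct.quotIdealMapEquivTensorQuot (A ⧸ I) J).symm.toLinearEquiv.restrictScalars A
    ≪≫ₗ (DoubleQuot.quotQuotEquivQuotSupₐ A I J).toLinearEquiv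

/-- The decomposition of `(A × A ⧸ I) ⊗ (A × A ⧸ J)` into cyclic modules. -/
noncomputable def prodQuotientTensorEquiv :
    (A × (A ⧸ I)) ⊗[A] (A × (A ⧸ J)) ≃ₗ[A] (A × (A ⧸ J)) × ((A ⧸ I) × (A ⧸ (I ⊔ J))) :=
  TensorProduct.prodLeft A A _ _ _ ≪≫ₗ (TensorProduct.lid A _).prodCongr
    (TensorProduct.prodRight A A _ _ _ ≪≫ₗ (TensorProduct.rid A _).prodCongr
      (quotientTensorQuotientEquiv I J))

end TensorProduct

theorem monoidHom_ext_int_prod {M : Type*} [CommMonoid M] {f g : Multiplicative (ℤ × ℤ) →* M}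
    (hfst : f (.ofAdd (1, 0)) = g (.ofAdd (1, 0))) (hsnd : f (.ofAdd (0, 1)) = g (.ofAdd (0, 1))) :
    f = g := by
  let e := (MulEquiv.prodMultiplicative ℤ ℤ).symm
  let e' : Multiplicative ℤ × Multiplicative ℤ →* Multiplicative (ℤ × ℤ) := e.toMonoidHom
  suffices f.comp e' = g.comp e' from (MonoidHom.cancel_right (f := e') e.surjective).1 this
  have comp_inl : (f.comp e').comp (.inl ..) = (g.comp e').comp (.inl ..) := MonoidHom.ext_mint hfst
  have comp_inr : (f.comp e').comp (.inr ..) = (g.comp e').comp (.inr ..) := MonoidHom.ext_mint hsnd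
  rw [← MonoidHom.coprod_unique (f.comp e'), comp_inl, comp_inr, MonoidHom.coprod_unique]

namespace BivariateLaurent

open AddMonoidAlgebra

variable (A : Type*) [CommRing A]

/-- The monomial `X`. -/
noncomputable def X : A[ℤ × ℤ] := .single (1, 0) 1

/-- The monomial `Y`. -/
noncomputable def Y : A[ℤ × ℤ] := .single (0, 1) 1

variable {A} {S : Type*} [CommRing S] [Algebra A S]

/-- The evaluation of Laurent polynomials at a pair of units. -/
noncomputable def lift (x y : Sˣ) : A[ℤ × ℤ] →ₐ[A] S :=
  AddMonoidAlgebra.lift A S (ℤ × ℤ) <|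
    (Units.coeHom S).comp <| ((zpowersHom Sˣ x).coprod (zpowersHom Sˣ y)).comp
      (MulEquiv.prodMultiplicative ℤ ℤ).toMonoidHom

theorem lift_X (x y : Sˣ) : lift x y (X A) = x := by
  simp [lift, X]

theorem lift_Y (x y : Sˣ) : lift x y (Y A) = y := by
  simp [lift, Y]

theorem algHom_ext {f g : A[ℤ × ℤ] →ₐ[A] S} (hX : f (X A) = g (X A)) (hY : f (Y A) = g (Y A)) :
    f = g :=
  AddMonoidAlgebra.algHom_ext' (monoidHom_ext_int_prod hX hY) (by ext)

variable (a b : A) (Lx Ly : ℕ)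

/-- The ideal of the Delfino–Chamon–You model on an `Lx × Ly` torus, with independent parameters
`a` and `b` for the two directions. -/
noncomputable abbrev torusIdeal : Ideal A[ℤ × ℤ] :=
  Ideal.span {(X A - algebraMap A _ a) * (X A - 1), (Y A - algebraMap A _ b) * (Y A - 1),
    X A ^ Lx - 1, Y A ^ Ly - 1}

end BivariateLaurent

/-- The bivariate Laurent polynomial ring modulo the ideal of the `Lx × Ly` torus. -/
abbrev TorusAlgebra {A : Type*} [CommRing A] (a b : A) (Lx Ly : ℕ) : Type _ :=
  AddMonoidAlgebra A (ℤ × ℤ) ⧸ BivariateLaurent.torusIdeal a b Lx Ly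

namespace TorusAlgebra

open BivariateLaurent

variable {A : Type*} [CommRing A] (a b : A) (Lx Ly : ℕ)

/-- The class of `X`. -/
noncomputable def x : TorusAlgebra a b Lx Ly := Ideal.Quotient.mk _ (X A)

/-- The class of `Y`. -/
noncomputable def y : TorusAlgebra a b Lx Ly := Ideal.Quotient.mk _ (Y A)

theorem x_sub_mul_x_sub_one : (x a b Lx Ly - algebraMap A _ a) * (x a b Lx Ly - 1) = 0 :=
  Ideal.Quotient.eq_zero_iff_mem.2 (Ideal.subset_span (by simp))

theorem y_sub_mul_y_sub_one : (y a b Lx Ly - algebraMap A _ b) * (y a b Lx Ly - 1) = 0 :=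
  Ideal.Quotient.eq_zero_iff_mem.2 (Ideal.subset_span (by simp))

theorem x_pow : x a b Lx Ly ^ Lx = 1 :=
  sub_eq_zero.1 (Ideal.Quotient.eq_zero_iff_mem.2 (Ideal.subset_span (by simp)))

theorem y_pow : y a b Lx Ly ^ Ly = 1 :=
  sub_eq_zero.1 (Ideal.Quotient.eq_zero_iff_mem.2 (Ideal.subset_span (by simp)))

variable {a b Lx Ly} {S : Type*} [CommRing S] [Algebra A S]

/-- The homomorphism out of `TorusAlgebra a b Lx Ly` determined by the images `x` and `y` of the
variables. -/
noncomputable def lift (hLx : Lx ≠ 0) (hLy : Ly ≠ 0) (x y : S)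
    (hx : (x - algebraMap A S a) * (x - 1) = 0) (hy : (y - algebraMap A S b) * (y - 1) = 0)
    (hxL : x ^ Lx = 1) (hyL : y ^ Ly = 1) : TorusAlgebra a b Lx Ly →ₐ[A] S :=
  Ideal.Quotient.liftₐ _
    (BivariateLaurent.lift (Units.ofPowEqOne x Lx hxL hLx) (Units.ofPowEqOne y Ly hyL hLy)) <| by
    simp only [← RingHom.mem_ker, ← SetLike.le_def]
    rw [Ideal.span_le]
    rintro _ (rfl | rfl | rfl | rfl) <;>
      simp only [SetLike.mem_coe, RingHom.mem_ker, map_mul, map_sub, map_pow, map_one,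
        AlgHom.commutes, lift_X, lift_Y, Units.val_ofPowEqOne, hx, hy, hxL, hyL, sub_self]

theorem algHom_ext {f g : TorusAlgebra a b Lx Ly →ₐ[A] S} (hx : f (x a b Lx Ly) = g (x a b Lx Ly))
    (hy : f (y a b Lx Ly) = g (y a b Lx Ly)) : f = g :=
  Ideal.Quotient.algHom_ext _ (BivariateLaurent.algHom_ext hx hy)

variable (a b)

/-- The homomorphism sending `x` to `root ⊗ 1` and `y` to `1 ⊗ root`. -/
noncomputable def toTensor (hLx : Lx ≠ 0) (hLy : Ly ≠ 0) :
    TorusAlgebra a b Lx Ly →ₐ[A] TwoRootAlgebra a Lx ⊗[A] TwoRootAlgebra b Ly :=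
  let left : TwoRootAlgebra a Lx →ₐ[A] TwoRootAlgebra a Lx ⊗[A] TwoRootAlgebra b Ly :=
    Algebra.TensorProduct.includeLeft
  let right : TwoRootAlgebra b Ly →ₐ[A] TwoRootAlgebra a Lx ⊗[A] TwoRootAlgebra b Ly :=
    Algebra.TensorProduct.includeRight
  lift hLx hLy (left (TwoRootAlgebra.root a Lx)) (right (TwoRootAlgebra.root b Ly))
    (by simpa using congrArg left (TwoRootAlgebra.root_sub_mul_root_sub_one a Lx))
    (by simpa using congrArg right (TwoRootAlgebra.root_sub_mul_root_sub_one b Ly))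
    (by rw [← map_pow, TwoRootAlgebra.root_pow, map_one])
    (by rw [← map_pow, TwoRootAlgebra.root_pow, map_one])

/-- The homomorphism sending `root ⊗ 1` to `x` and `1 ⊗ root` to `y`. -/
noncomputable def ofTensor :
    TwoRootAlgebra a Lx ⊗[A] TwoRootAlgebra b Ly →ₐ[A] TorusAlgebra a b Lx Ly :=
  Algebra.TensorProduct.productMap
    (TwoRootAlgebra.lift (x a b Lx Ly) (x_sub_mul_x_sub_one a b Lx Ly) (x_pow a b Lx Ly))
    (TwoRootAlgebra.lift (y a b Lx Ly) (y_sub_mul_y_sub_one a b Lx Ly) (y_pow a b Lx Ly))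

theorem ofTensor_root_tmul_one :
    ofTensor a b (TwoRootAlgebra.root a Lx ⊗ₜ[A] (1 : TwoRootAlgebra b Ly)) = x a b Lx Ly := by
  simp [ofTensor, TwoRootAlgebra.lift_root]

theorem ofTensor_one_tmul_root :
    ofTensor a b ((1 : TwoRootAlgebra a Lx) ⊗ₜ[A] TwoRootAlgebra.root b Ly) = y a b Lx Ly := by
  simp [ofTensor, TwoRootAlgebra.lift_root]

theorem toTensor_x (hLx : Lx ≠ 0) (hLy : Ly ≠ 0) :
    toTensor a b hLx hLy (x a b Lx Ly) = TwoRootAlgebra.root a Lx ⊗ₜ 1 :=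
  (Ideal.Quotient.lift_mk ..).trans (lift_X ..)

theorem toTensor_y (hLx : Lx ≠ 0) (hLy : Ly ≠ 0) :
    toTensor a b hLx hLy (y a b Lx Ly) = 1 ⊗ₜ TwoRootAlgebra.root b Ly :=
  (Ideal.Quotient.lift_mk ..).trans (lift_Y ..)

/-- The two directions of the torus separate into tensor factors. -/
noncomputable def equivTensor (hLx : Lx ≠ 0) (hLy : Ly ≠ 0) :
    TorusAlgebra a b Lx Ly ≃ₐ[A] TwoRootAlgebra a Lx ⊗[A] TwoRootAlgebra b Ly :=
  AlgEquiv.ofAlgHom (toTensor a b hLx hLy) (ofTensor a b)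
    (Algebra.TensorProduct.ext
      (TwoRootAlgebra.algHom_ext <| by simp [ofTensor_root_tmul_one, toTensor_x])
      (TwoRootAlgebra.algHom_ext (a := b) (L := Ly) <| by
        simp [ofTensor_one_tmul_root, toTensor_y]))
    (algHom_ext (by simp [ofTensor_root_tmul_one, toTensor_x])
      (by simp [ofTensor_one_tmul_root, toTensor_y]))

/-- The decomposition of `TorusAlgebra a b Lx Ly` into cyclic `A`-modules. -/
noncomputable def linearEquivProd (hLx : Lx ≠ 0) (hLy : Ly ≠ 0) :
    TorusAlgebra a b Lx Ly ≃ₗ[A]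
      (A × (A ⧸ Ideal.span {∑ m ∈ Finset.range Ly, b ^ m})) ×
        ((A ⧸ Ideal.span {∑ m ∈ Finset.range Lx, a ^ m}) ×
          (A ⧸ (Ideal.span {∑ m ∈ Finset.range Lx, a ^ m} ⊔
            Ideal.span {∑ m ∈ Finset.range Ly, b ^ m}))) :=
  (equivTensor a b hLx hLy).toLinearEquiv ≪≫ₗ
    TensorProduct.congr (quotientSpanSMulOmegaEquiv _ _) (quotientSpanSMulOmegaEquiv _ _) ≪≫ₗ
    prodQuotientTensorEquiv _ _

theorem card_eq (hLx : Lx ≠ 0) (hLy : Ly ≠ 0) :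
    Nat.card (TorusAlgebra a b Lx Ly) =
      Nat.card A * Nat.card (A ⧸ Ideal.span {∑ m ∈ Finset.range Lx, a ^ m}) *
        Nat.card (A ⧸ Ideal.span {∑ m ∈ Finset.range Ly, b ^ m}) *
        Nat.card (A ⧸ (Ideal.span {∑ m ∈ Finset.range Lx, a ^ m} ⊔
          Ideal.span {∑ m ∈ Finset.range Ly, b ^ m})) := by
  rw [Nat.card_congr (linearEquivProd a b hLx hLy).toEquiv, Nat.card_prod, Nat.card_prod,
    Nat.card_prod]
  ring

end TorusAlgebra

theorem span_singleton_sup_span_singleton_intCast (A : Type*) [CommRing A] (g h : ℤ) :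
    Ideal.span {(g : A)} ⊔ Ideal.span {(h : A)} = Ideal.span {((Int.gcd g h : ℤ) : A)} := by
  have map_span_gcd := congrArg (Ideal.map (Int.castRingHom A)) (span_gcd g h)
  simpa only [Ideal.map_span, Set.image_pair, Set.image_singleton, Ideal.span_insert,
    Ideal.map_sup, ← Int.coe_gcd, eq_intCast] using map_span_gcd.symm

theorem ker_castHom_gcd (N : ℕ) (g : ℤ) :
    RingHom.ker (ZMod.castHom (Int.natCast_dvd_natCast.1 (Int.gcd_dvd_left N g))
      (ZMod (Int.gcd N g))) = Ideal.span {(g : ZMod N)} := by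
  ext x
  obtain ⟨x, rfl⟩ := ZMod.intCast_surjective x
  rw [RingHom.mem_ker, map_intCast, ZMod.intCast_zmod_eq_zero_iff_dvd, Ideal.mem_span_singleton]
  constructor
  · rintro ⟨k, rfl⟩
    exact ⟨(Int.gcdB N g * k : ℤ), by simp [Int.gcd_eq_gcd_ab, mul_assoc]⟩
  · rintro ⟨k, hk⟩
    obtain ⟨k, rfl⟩ := ZMod.intCast_surjective k
    rw [← Int.cast_mul, ← sub_eq_zero, ← Int.cast_sub, ZMod.intCast_zmod_eq_zero_iff_dvd] at hk
    exact (dvd_iff_dvd_of_dvd_sub ((Int.gcd_dvd_left _ _).trans hk)).2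
      (dvd_mul_of_dvd_left (Int.gcd_dvd_right _ _) _)

theorem card_zmod_quotient_span_intCast (N : ℕ) (g : ℤ) :
    Nat.card (ZMod N ⧸ Ideal.span {(g : ZMod N)}) = Int.gcd N g := by
  rw [← ker_castHom_gcd, Nat.card_congr
    (RingHom.quotientKerEquivOfSurjective (ZMod.castHom_surjective _)).toEquiv, Nat.card_zmod]

/-- `M` is the largest divisor of `N` that is coprime to `a`, written `N_a` in the paper. -/
def IsLargestCoprimeDivisor (N : ℕ) (a : ℤ) (M : ℕ) : Prop :=
  IsGreatest {d : ℕ | d ∣ N ∧ IsCoprime (d : ℤ) a} M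

namespace IsLargestCoprimeDivisor

variable {N M : ℕ} {a : ℤ}

theorem dvd_of_isCoprime (hM : IsLargestCoprimeDivisor N a M) (hN : N ≠ 0) {d : ℕ} (hdN : d ∣ N)
    (hd : IsCoprime (d : ℤ) a) : d ∣ M := by
  obtain ⟨⟨hMN, hMa⟩, hmax⟩ := hM
  have lcm_dvd : M.lcm d ∣ N := Nat.lcm_dvd hMN hdN
  have lcm_coprime : IsCoprime ((M.lcm d : ℕ) : ℤ) a :=
    (hMa.mul_left hd).of_isCoprime_of_dvd_left (by exact_mod_cast M.lcm_dvd_mul d)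
  have lcm_eq : M.lcm d = M :=
    (hmax ⟨lcm_dvd, lcm_coprime⟩).antisymm
      (Nat.le_of_dvd (Nat.pos_of_ne_zero (ne_zero_of_dvd_ne_zero hN lcm_dvd)) (M.dvd_lcm_left d))
  exact lcm_eq ▸ M.dvd_lcm_right d

theorem gcd_eq_gcd (hM : IsLargestCoprimeDivisor N a M) (hN : N ≠ 0) {g : ℤ}
    (hg : IsCoprime g a) : Int.gcd N g = Int.gcd M g := by
  have gcd_dvd_M : Int.gcd N g ∣ M :=
    hM.dvd_of_isCoprime hN (Int.natCast_dvd_natCast.1 (Int.gcd_dvd_left _ _))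
      (hg.of_isCoprime_of_dvd_left (Int.gcd_dvd_right _ _))
  apply Nat.dvd_antisymm
  · exact Int.dvd_gcd (Int.natCast_dvd_natCast.2 gcd_dvd_M) (Int.gcd_dvd_right _ _)
  · exact Int.gcd_dvd_gcd_of_dvd_left _ (Int.natCast_dvd_natCast.2 hM.1.1)

end IsLargestCoprimeDivisor

theorem stmt15_general (N Lx Ly : ℕ) (hN : 0 < N) (hLx : 0 < Lx) (hLy : 0 < Ly) (a b : ℤ)
    (Na Nb : ℕ) (hNa : IsLargestCoprimeDivisor N a Na) (hNb : IsLargestCoprimeDivisor N b Nb) :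
    Nat.card (RR N ⧸ Ideal.span
        {(Xv N - (a : RR N)) * (Xv N - 1), (Yv N - (b : RR N)) * (Yv N - 1),
          Xv N ^ Lx - 1, Yv N ^ Ly - 1}) =
      N * Int.gcd Na (∑ m ∈ Finset.range Lx, a ^ m) *
        Int.gcd Nb (∑ m ∈ Finset.range Ly, b ^ m) *
        Int.gcd Na
          (Int.gcd (∑ m ∈ Finset.range Lx, a ^ m) (∑ m ∈ Finset.range Ly, b ^ m)) := by
  set G : ℤ := ∑ m ∈ Finset.range Lx, a ^ m
  set H : ℤ := ∑ m ∈ Finset.range Ly, b ^ m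
  have G_coprime : IsCoprime G a := isCoprime_geom_sum a hLx.ne'
  have H_coprime : IsCoprime H b := isCoprime_geom_sum b hLy.ne'
  have gcd_coprime : IsCoprime (Int.gcd G H : ℤ) a :=
    G_coprime.of_isCoprime_of_dvd_left (Int.gcd_dvd_left G H)
  rw [← hNa.gcd_eq_gcd hN.ne' G_coprime, ← hNb.gcd_eq_gcd hN.ne' H_coprime,
    ← hNa.gcd_eq_gcd hN.ne' gcd_coprime]
  have card_torus := TorusAlgebra.card_eq (a : ZMod N) (b : ZMod N) hLx.ne' hLy.ne'
  simp only [← Int.cast_pow, ← Int.cast_sum, span_singleton_sup_span_singleton_intCast,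
    card_zmod_quotient_span_intCast, Nat.card_zmod, TorusAlgebra,
    BivariateLaurent.torusIdeal, map_intCast] at card_torus
  exact card_torus

/-- Ground state degeneracy of the Delfino–Chamon–You model on an `L_x × L_y` torus:
the quotient ring has cardinality
`N · gcd(N_a, G_{L_x}) · gcd(N_a, G_{L_y}) · gcd(N_a, G_{L_x}, G_{L_y})`. -/
theorem stmt15 (N Lx Ly : ℕ) (hN : 0 < N) (hLx : 0 < Lx) (hLy : 0 < Ly)
    (a : ℤ) (Na : ℕ)
    (hNa_dvd : Na ∣ N) (hNa_cop : IsCoprime (Na : ℤ) a)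
    (hNa_max : ∀ d : ℕ, d ∣ N → IsCoprime ((d : ℤ)) a → d ≤ Na) :
    Nat.card (RR N ⧸ Ideal.span
        {(Xv N - (a : RR N)) * (Xv N - 1), (Yv N - (a : RR N)) * (Yv N - 1),
          Xv N ^ Lx - 1, Yv N ^ Ly - 1}) =
      N * Int.gcd (Na : ℤ) (∑ m ∈ Finset.range Lx, a ^ m) *
        Int.gcd (Na : ℤ) (∑ m ∈ Finset.range Ly, a ^ m) *
        Int.gcd (Na : ℤ)
          (Int.gcd (∑ m ∈ Finset.range Lx, a ^ m) (∑ m ∈ Finset.range Ly, a ^ m)) :=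
  have hNa : IsLargestCoprimeDivisor N a Na :=
    ⟨⟨hNa_dvd, hNa_cop⟩, fun d hd => hNa_max d hd.1 hd.2⟩
  stmt15_general N Lx Ly hN hLx hLy a a Na Na hNa hNa
end

section
/- Let N, L_x, L_y be positive integers and f, g ∈ R_N such that BB_N(f,g) is topological. Suppose l_x is the least positive integer with X^{l_x} − 1 ∈ Ideal.span {f, g} and l_y is the least positive integer with Y^{l_y} − 1 ∈ Ideal.span {f, g}. Then the cardinality of R_N ⧸ Ideal.span {f, g, X^{L_x} − 1, Y^{L_y} − 1} equals the cardinality of R_N ⧸ Ideal.span {f, g, X^{gcd(L_x, l_x)} − 1, Y^{gcd(L_y, l_y)} − 1}; that is, the ground state degeneracy satisfies GSD(L_x, L_y) = GSD(gcd(L_x, l_x), gcd(L_y, l_y)). -/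
/-- The code `BB_N(f,g)` is topological. -/
def IsTopological {N : ℕ} (f g : RR N) : Prop :=
  ∀ r s : RR N, r * f + s * g = 0 → ∃ h : RR N, r = h * g ∧ s = -(h * f)

theorem span_insert_insert_eq_span_pair_sup {R : Type*} [Semiring R] (f g : R) (s : Set R) :
    Ideal.span (insert f (insert g s)) = Ideal.span {f, g} ⊔ Ideal.span s := by
  rw [← Ideal.span_union, Set.insert_union, Set.singleton_union]

section Periodicity

variable {R : Type*} [CommRing R] {I : Ideal R} {a b : R} {k l : ℕ}

theorem pow_gcd_sub_one_mem_iff {m n : ℕ} :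
    a ^ Nat.gcd m n - 1 ∈ I ↔ a ^ m - 1 ∈ I ∧ a ^ n - 1 ∈ I := by
  simp only [← Ideal.Quotient.mk_eq_mk_iff_sub_mem, map_pow, map_one, pow_gcd_eq_one]

theorem sup_span_pow_sub_one_eq_sup_span_pow_gcd_sub_one (ha : a ^ k - 1 ∈ I) (m : ℕ) :
    I ⊔ Ideal.span {a ^ m - 1} = I ⊔ Ideal.span {a ^ Nat.gcd m k - 1} := by
  -- The two ideals are contained in the same ideals `J`: if `I ≤ J` then `a ^ k - 1 ∈ J`.
  refine eq_of_forall_ge_iff fun J => ?_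
  simp only [sup_le_iff, Ideal.span_singleton_le_iff_mem, pow_gcd_sub_one_mem_iff]
  exact and_congr_right fun hIJ => (and_iff_left (hIJ ha)).symm

theorem stmt18_general (ha : a ^ k - 1 ∈ I) (hb : b ^ l - 1 ∈ I) (m n : ℕ) :
    I ⊔ Ideal.span {a ^ m - 1, b ^ n - 1} =
      I ⊔ Ideal.span {a ^ Nat.gcd m k - 1, b ^ Nat.gcd n l - 1} := by
  simp only [Ideal.span_insert, sup_sup_distrib_left I]
  rw [sup_span_pow_sub_one_eq_sup_span_pow_gcd_sub_one ha,
    sup_span_pow_sub_one_eq_sup_span_pow_gcd_sub_one hb]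

end Periodicity

/-- `GSD(L_x, L_y) = GSD(gcd(L_x, l_x), gcd(L_y, l_y))` where `l_x`, `l_y` are the anyon
periodicities of a topological code `BB_N(f,g)`. -/
theorem stmt18 (N Lx Ly : ℕ) (hN : 0 < N) (hLx : 0 < Lx) (hLy : 0 < Ly)
    (f g : RR N) (htopo : IsTopological f g)
    (lx : ℕ) (hlx_pos : 0 < lx) (hlx_mem : Xv N ^ lx - 1 ∈ Ideal.span {f, g})
    (hlx_min : ∀ m : ℕ, 0 < m → Xv N ^ m - 1 ∈ Ideal.span {f, g} → lx ≤ m)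
    (ly : ℕ) (hly_pos : 0 < ly) (hly_mem : Yv N ^ ly - 1 ∈ Ideal.span {f, g})
    (hly_min : ∀ m : ℕ, 0 < m → Yv N ^ m - 1 ∈ Ideal.span {f, g} → ly ≤ m) :
    Nat.card (RR N ⧸ Ideal.span {f, g, Xv N ^ Lx - 1, Yv N ^ Ly - 1}) =
      Nat.card (RR N ⧸ Ideal.span
        {f, g, Xv N ^ Nat.gcd Lx lx - 1, Yv N ^ Nat.gcd Ly ly - 1}) := by
  rw [span_insert_insert_eq_span_pair_sup, span_insert_insert_eq_span_pair_sup,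
    stmt18_general hlx_mem hly_mem]
end

section
/- Let p be a prime, let c₀, c₂, d₀, d₂ be nonzero elements of ZMod p, and let (u₁, v₁), (u₂, v₂) ∈ ℤ × ℤ be exponent vectors with determinant u₁·v₂ − v₁·u₂ ≠ 0. Set f = c₀ + c₂·X^{u₁}Y^{v₁} and g = d₀ + d₂·X^{u₂}Y^{v₂} in R_p. Then the dimension of R_p ⧸ Ideal.span {f, g} as a vector space over ZMod p equals |u₁·v₂ − v₁·u₂|. In particular, for the binomial toric-layout code with f = c₀ + c₂·X^{−α}Y^{b} and g = d₀ + d₂·X^{a}Y^{−β}, the topological index is |αβ − ab|. -/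
/-!
Up to a unit, a binomial `c + d X^v` is `X^v - u` with `u = -c / d`. When the exponents `v i` are
linearly independent, they are a basis of the subgroup `H` they generate, so the values `u i` extend
to a character `χ` of `H`, and the ideal of all the binomials identifies `X^h` with `χ h` for every
`h` in `H`. Hence representatives of the cosets of `H` span the quotient. They stay independent
because `X^g ↦ χ (g - r) [r]`, with `r` the representative of the coset of `g`, kills the ideal.
The rank is therefore the index of `H`, which is the absolute value of the determinant of the `v i`.
-/

open AddMonoidAlgebra Module

theorem addChar_eq_of_eqOn_dense {H M : Type*} [AddGroup H] [Monoid M] {S : Set H}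
    (hS : AddSubgroup.closure S = ⊤) {χ ψ : AddChar H M} (h : S.EqOn χ ψ) : χ = ψ := by
  refine AddChar.toMonoidHomEquiv.injective
    (MonoidHom.eq_of_eqOn_dense (s := Multiplicative.toAdd ⁻¹' S) ?_ h)
  rw [← AddSubgroup.toSubgroup_closure, hS]
  rfl

theorem exists_addChar_apply_basis_eq {ι H k : Type*} [AddCommGroup H] [CommRing k]
    (b : Basis ι ℤ H) (u : ι → kˣ) : ∃ χ : AddChar H k, ∀ i, χ (b i) = u i := by
  let f : H →ₗ[ℤ] Additive kˣ := b.constr ℤ fun i => Additive.ofMul (u i)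
  refine ⟨(Units.coeHom k).compAddChar (AddChar.toAddMonoidHomEquiv.symm f.toAddMonoidHom),
    fun i => ?_⟩
  simp [f]

section CosetOffset

variable {G : Type*} [AddCommGroup G] {H : AddSubgroup G}

/-- The difference between `g` and the representative `Quotient.out` of its coset modulo `H`: the
`H`-component of `g` once the representatives are fixed. -/
noncomputable def cosetOffset (H : AddSubgroup G) (g : G) : H :=
  ⟨-(g : G ⧸ H).out + g, QuotientAddGroup.eq.mp (QuotientAddGroup.out_eq' _)⟩

theorem cosetOffset_add_out (g : G) : (cosetOffset H g : G) + (g : G ⧸ H).out = g := by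
  simp [cosetOffset, add_comm]

theorem quotient_mk_coe_add (h : H) (g : G) : ((h + g : G) : G ⧸ H) = g :=
  QuotientAddGroup.eq.mpr (by simp)

theorem cosetOffset_coe_add (h : H) (g : G) : cosetOffset H (h + g) = h + cosetOffset H g := by
  ext
  simp only [cosetOffset, quotient_mk_coe_add, H.coe_add, add_left_comm]

theorem cosetOffset_out (q : G ⧸ H) : cosetOffset H q.out = 0 := by
  ext
  simp [cosetOffset]

end CosetOffset

section CharacterIdeal

variable {k G : Type*} [CommRing k] [AddCommGroup G] {H : AddSubgroup G} (χ : AddChar H k)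

/-- The ideal of the group algebra of `G` that identifies each monomial `h` of the subgroup `H`
with the scalar `χ h`. -/
noncomputable def characterIdeal : Ideal k[G] :=
  Ideal.span (Set.range fun h : H => single (h : G) 1 - single 0 (χ h))

theorem characterIdeal_eq_span_image {S : Set H} (hS : AddSubgroup.closure S = ⊤) :
    characterIdeal χ = Ideal.span ((fun h : H => single (h : G) 1 - single 0 (χ h)) '' S) := by
  refine le_antisymm (Ideal.span_le.mpr ?_) (Ideal.span_mono (Set.image_subset_range _ _))
  set I := Ideal.span ((fun h : H => single (h : G) (1 : k) - single 0 (χ h)) '' S)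
  let monomialClass : AddChar H (k[G] ⧸ I) :=
    { toFun h := Ideal.Quotient.mk I (single (h : G) 1)
      map_zero_eq_one' := rfl
      map_add_eq_mul' x y := by rw [← map_mul, single_mul_single, mul_one, H.coe_add] }
  let scalarClass : AddChar H (k[G] ⧸ I) :=
    ((Ideal.Quotient.mk I).comp singleZeroRingHom : k →* k[G] ⧸ I).compAddChar χ
  have monomialClass_eq : monomialClass = scalarClass :=
    addChar_eq_of_eqOn_dense hS fun h hh =>
      Ideal.Quotient.eq.mpr (Ideal.subset_span (Set.mem_image_of_mem _ hh))
  rintro _ ⟨h, rfl⟩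
  exact Ideal.Quotient.eq.mp (DFunLike.congr_fun monomialClass_eq h)

theorem quotient_mk_single_coe_add (h : H) (g : G) :
    Ideal.Quotient.mk (characterIdeal χ) (single (h + g) 1) =
      χ h • Ideal.Quotient.mk (characterIdeal χ) (single g 1) := by
  have hmem : single (h : G) (1 : k) - single 0 (χ h) ∈ characterIdeal χ :=
    Ideal.subset_span (Set.mem_range_self h)
  rw [← Ideal.Quotient.mkₐ_eq_mk k, ← map_smul, Ideal.Quotient.mkₐ_eq_mk, Ideal.Quotient.eq]
  simpa [sub_mul, single_mul_single] using Ideal.mul_mem_right (single g 1) _ hmem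

/-- The `k`-linear map sending a monomial `g` to the coset of `g` with coefficient `χ h`, where
`h` is the offset of `g` from the representative of its coset: the coordinates of `g` modulo
`characterIdeal χ` in the basis of coset representatives. -/
noncomputable def characterProjection : k[G] →ₗ[k] (G ⧸ H →₀ k) :=
  Finsupp.linearCombination k (fun g : G => Finsupp.single (g : G ⧸ H) (χ (cosetOffset H g))) ∘ₗ
    (coeffLinearEquiv k).toLinearMap

theorem characterProjection_single (g : G) (a : k) :
    characterProjection χ (single g a) = Finsupp.single (g : G ⧸ H) (a * χ (cosetOffset H g)) := by
  simp [characterProjection]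

theorem characterProjection_single_out (q : G ⧸ H) :
    characterProjection χ (single q.out 1) = Finsupp.single q 1 := by
  simp [characterProjection_single, cosetOffset_out]

theorem characterProjection_single_coe_add (h : H) (g : G) (a : k) :
    characterProjection χ (single (h + g) a) = χ h • characterProjection χ (single g a) := by
  rw [characterProjection_single, characterProjection_single, quotient_mk_coe_add,
    cosetOffset_coe_add, AddChar.map_add_eq_mul, mul_left_comm, Finsupp.smul_single, smul_eq_mul]

variable {χ} in
theorem characterProjection_eq_zero_of_mem {x : k[G]} (hx : x ∈ characterIdeal χ) :
    characterProjection χ x = 0 := by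
  suffices ∀ y, characterProjection χ (y * x) = 0 by simpa using this 1
  induction hx using Submodule.span_induction with
  | zero => simp
  | add x y _ _ hx hy => exact fun z => by rw [mul_add, map_add, hx, hy, add_zero]
  | smul a x _ hx => exact fun z => by rw [smul_eq_mul, ← mul_assoc, hx]
  | mem x hx =>
    obtain ⟨h, rfl⟩ := hx
    intro y
    induction y using AddMonoidAlgebra.induction_linear with
    | zero => simp
    | add x y hx hy => rw [add_mul, map_add, hx, hy, add_zero]
    | single g a =>
      rw [mul_sub, single_mul_single, single_mul_single, map_sub, sub_eq_zero, add_comm g,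
        characterProjection_single_coe_add, ← map_smul, smul_single]
      simp [mul_comm]

theorem linearIndependent_quotient_mk_single_out :
    LinearIndependent k fun q : G ⧸ H =>
      Ideal.Quotient.mk (characterIdeal χ) (single q.out 1) := by
  let I := (characterIdeal χ).restrictScalars k
  let projection : (k[G] ⧸ characterIdeal χ) →ₗ[k] (G ⧸ H →₀ k) :=
    I.liftQ (characterProjection χ) (fun _ => characterProjection_eq_zero_of_mem) ∘ₗ
      (Submodule.Quotient.restrictScalarsEquiv k (characterIdeal χ)).symm.toLinearMap
  refine .of_comp projection ?_
  convert! Finsupp.linearIndependent_single_one k (G ⧸ H) with q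
  exact characterProjection_single_out χ q

theorem span_range_quotient_mk_single_out :
    Submodule.span k (Set.range fun q : G ⧸ H =>
      Ideal.Quotient.mk (characterIdeal χ) (single q.out 1)) = ⊤ := by
  refine eq_top_iff.mpr fun x _ => ?_
  obtain ⟨x, rfl⟩ := Ideal.Quotient.mk_surjective x
  induction x using AddMonoidAlgebra.induction_linear with
  | zero => simp
  | add x y hx hy =>
    rw [map_add]
    exact Submodule.add_mem _ (hx trivial) (hy trivial)
  | single g a =>
    have single_eq_smul : single g a =
        a • single ((cosetOffset H g : G) + (g : G ⧸ H).out) (1 : k) := by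
      simp [cosetOffset_add_out]
    rw [single_eq_smul, ← Ideal.Quotient.mkₐ_eq_mk k, map_smul, Ideal.Quotient.mkₐ_eq_mk,
      quotient_mk_single_coe_add]
    exact Submodule.smul_mem _ _ (Submodule.smul_mem _ _ (Submodule.subset_span ⟨g, rfl⟩))

theorem finrank_quotient_characterIdeal [Nontrivial k] :
    finrank k (k[G] ⧸ characterIdeal χ) = H.index :=
  finrank_eq_nat_card_basis
    (.mk (linearIndependent_quotient_mk_single_out χ) (span_range_quotient_mk_single_out χ).ge)

end CharacterIdeal

theorem linearIndependent_of_basis_det_ne_zero {R M ι : Type*} [CommRing R] [IsDomain R]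
    [AddCommGroup M] [Module R M] [Fintype ι] [DecidableEq ι] (b : Basis ι R M) {v : ι → M}
    (hv : b.det v ≠ 0) : LinearIndependent R v :=
  .of_comp b.equivFun.toLinearMap (Matrix.linearIndependent_cols_of_det_ne_zero hv)

theorem exists_basis_closure_range {G ι : Type*} [AddCommGroup G] {v : ι → G}
    (hv : LinearIndependent ℤ v) :
    ∃ b : Basis ι ℤ (AddSubgroup.closure (Set.range v)), ∀ i, (b i : G) = v i := by
  rw [← Submodule.span_int_eq_addSubgroupClosure]
  exact ⟨Basis.span hv, fun i => congrArg Subtype.val (Basis.span_apply hv i)⟩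

theorem finrank_quotient_span_single_sub_basis {k G ι : Type*} [CommRing k] [Nontrivial k]
    [AddCommGroup G] {H : AddSubgroup G} (b : Basis ι ℤ H) (u : ι → kˣ) :
    finrank k (k[G] ⧸ Ideal.span
      (Set.range fun i => single (b i : G) (1 : k) - single 0 (u i : k))) = H.index := by
  obtain ⟨χ, hχ⟩ := exists_addChar_apply_basis_eq b u
  have closure_range : AddSubgroup.closure (Set.range b) = ⊤ := by
    rw [← Submodule.span_int_eq_addSubgroupClosure, b.span_eq, Submodule.top_toAddSubgroup]
  have characterIdeal_eq : characterIdeal χ =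
      Ideal.span (Set.range fun i => single (b i : G) (1 : k) - single 0 (u i : k)) := by
    simp only [characterIdeal_eq_span_image χ closure_range, ← Set.range_comp, Function.comp_def,
      hχ]
  rw [← characterIdeal_eq, finrank_quotient_characterIdeal]

theorem span_singleton_single_zero_add_single {k G : Type*} [CommRing k] [AddCommGroup G]
    (g : G) (c d : kˣ) :
    Ideal.span {single (0 : G) (c : k) + single g (d : k)} =
      Ideal.span {single g (1 : k) - single 0 ((-(c / d) : kˣ) : k)} := by
  have hd : IsUnit (single (0 : G) (d : k)) := d.isUnit.map singleZeroRingHom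
  rw [← Ideal.span_singleton_mul_left_unit hd (single g 1 - _), mul_sub]
  simp [single_mul_single, div_eq_mul_inv, mul_left_comm, add_comm]

theorem det_finTwoProd {R : Type*} [CommRing R] (x y : R × R) :
    (Basis.finTwoProd R).det ![x, y] = x.1 * y.2 - x.2 * y.1 := by
  simp [Basis.det_apply, Matrix.det_fin_two, Basis.toMatrix_apply, mul_comm]

theorem range_fin_two {α : Type*} (f : Fin 2 → α) : Set.range f = {f 0, f 1} := by
  ext
  simp [Fin.exists_fin_two, eq_comm]

theorem stmt19_general {k G ι : Type*} [CommRing k] [Nontrivial k] [AddCommGroup G] [Fintype ι]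
    [DecidableEq ι] (b : Basis ι ℤ G) (v : ι → G) (hv : b.det v ≠ 0) (c d : ι → kˣ) :
    finrank k (k[G] ⧸ Ideal.span
      (Set.range fun i => single (0 : G) (c i : k) + single (v i) (d i : k))) =
      (b.det v).natAbs := by
  obtain ⟨bH, coe_bH⟩ := exists_basis_closure_range (linearIndependent_of_basis_det_ne_zero b hv)
  have span_eq : Ideal.span (Set.range fun i => single (0 : G) (c i : k) + single (v i) (d i : k)) =
      Ideal.span (Set.range fun i =>
        single (bH i : G) (1 : k) - single 0 ((-(c i / d i) : kˣ) : k)) := by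
    simp_rw [Ideal.span_range_eq_iSup, span_singleton_single_zero_add_single, coe_bH]
  rw [span_eq, finrank_quotient_span_single_sub_basis, AddSubgroup.index_eq_natAbs_det b _ bH]
  simp only [coe_bH]

/-- The topological index of the binomial code
`BB_p(c₀ + c₂ X^{u₁}Y^{v₁}, d₀ + d₂ X^{u₂}Y^{v₂})` is `|u₁v₂ - v₁u₂|`. -/
theorem stmt19 (p : ℕ) (hp : p.Prime) (c₀ c₂ d₀ d₂ : ZMod p)
    (hc₀ : c₀ ≠ 0) (hc₂ : c₂ ≠ 0) (hd₀ : d₀ ≠ 0) (hd₂ : d₂ ≠ 0)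
    (u₁ v₁ u₂ v₂ : ℤ) (hdet : u₁ * v₂ - v₁ * u₂ ≠ 0) :
    Module.finrank (ZMod p)
      (RR p ⧸ Ideal.span
        {AddMonoidAlgebra.single ((0 : ℤ), (0 : ℤ)) c₀ +
            AddMonoidAlgebra.single (u₁, v₁) c₂,
          AddMonoidAlgebra.single ((0 : ℤ), (0 : ℤ)) d₀ +
            AddMonoidAlgebra.single (u₂, v₂) d₂}) =
      (u₁ * v₂ - v₁ * u₂).natAbs := by
  have := Fact.mk hp
  have key := stmt19_general (Basis.finTwoProd ℤ) ![(u₁, v₁), (u₂, v₂)] (by rwa [det_finTwoProd])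
    ![.mk0 c₀ hc₀, .mk0 d₀ hd₀] ![.mk0 c₂ hc₂, .mk0 d₂ hd₂]
  rwa [det_finTwoProd, range_fin_two] at key
end
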